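/- arXiv:0704.3054 — 3 statements merged into one kernel-verified Lean document; each statement's English description precedes it below -/
import Mathlib

section
/- Let A be an n×n positive definite Hermitian complex matrix and let E be an n×n positive semidefinite Hermitian complex matrix with E ≠ 0. Then A + E is invertible and trace((A + E)⁻¹) < trace(A⁻¹). (Strict decrease of the trace of the inverse when Fisher information is added; used in the paper's conclusion that tuning the relay frequency, γ = 1, strictly reduces the summed Cramér–Rao bound.) -/
open Matrix
open scoped ComplexOrder

/-!
Put `B = A + E`. Applying the resolvent identity twice gives
`A⁻¹ - B⁻¹ = B⁻¹ E B⁻¹ + (E B⁻¹)ᴴ A⁻¹ (E B⁻¹)`. The first summand has nonnegative trace; the trace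
of the second is the sum of the values of the positive definite form `A⁻¹` at the columns of
`E B⁻¹ ≠ 0`, so it is positive.
-/

section

variable {m n R : Type*} [Fintype m] [Fintype n]

theorem inv_sub_inv_add_eq [DecidableEq n] [CommRing R] {A E : Matrix n n R} (hA : IsUnit A)
    (hAE : IsUnit (A + E)) :
    A⁻¹ - (A + E)⁻¹ = (A + E)⁻¹ * E * (A + E)⁻¹ + (A + E)⁻¹ * E * A⁻¹ * (E * (A + E)⁻¹) := by
  have resolvent : A⁻¹ - (A + E)⁻¹ = A⁻¹ * E * (A + E)⁻¹ := by
    rw [Matrix.inv_sub_inv (iff_of_true hA hAE), add_sub_cancel_left]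
  have inv_eq : A⁻¹ = (A + E)⁻¹ + (A + E)⁻¹ * E * A⁻¹ := by
    rw [← sub_eq_iff_eq_add', ← neg_sub, Matrix.inv_sub_inv (iff_of_true hAE hA),
      sub_add_cancel_left, mul_neg, neg_mul, neg_neg]
  calc A⁻¹ - (A + E)⁻¹
      = A⁻¹ * E * (A + E)⁻¹ := resolvent
    _ = ((A + E)⁻¹ + (A + E)⁻¹ * E * A⁻¹) * E * (A + E)⁻¹ := by rw [← inv_eq]
    _ = (A + E)⁻¹ * E * (A + E)⁻¹ + (A + E)⁻¹ * E * A⁻¹ * (E * (A + E)⁻¹) := by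
      simp only [add_mul, Matrix.mul_assoc]

theorem trace_conjTranspose_mul_mul_eq_sum [NonUnitalSemiring R] [Star R] (M : Matrix n n R)
    (C : Matrix n m R) : (Cᴴ * M * C).trace = ∑ j, star (C.col j) ⬝ᵥ (M *ᵥ C.col j) := by
  rw [Matrix.mul_assoc]
  rfl

theorem trace_conjTranspose_mul_mul_pos [Ring R] [PartialOrder R] [IsOrderedAddMonoid R]
    [StarRing R] {M : Matrix n n R} (hM : M.PosDef) {C : Matrix n m R} (hC : C ≠ 0) :
    0 < (Cᴴ * M * C).trace := by
  obtain ⟨j, hj⟩ : ∃ j, C.col j ≠ 0 := by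
    contrapose! hC
    exact Matrix.ext_col hC
  rw [trace_conjTranspose_mul_mul_eq_sum]
  exact Finset.sum_pos' (fun i _ ↦ hM.posSemidef.dotProduct_mulVec_nonneg (C.col i))
    ⟨j, Finset.mem_univ j, hM.dotProduct_mulVec_pos hj⟩

theorem trace_inv_strict_decrease_general {K : Type*} [Field K] [PartialOrder K]
    [IsOrderedAddMonoid K] [StarRing K] [DecidableEq n] {A E : Matrix n n K}
    (hA : A.PosDef) (hE : E.PosSemidef) (hE0 : E ≠ 0) :
    IsUnit (A + E) ∧ ((A + E)⁻¹).trace < (A⁻¹).trace := by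
  have hB : (A + E).PosDef := hA.add_posSemidef hE
  have hBinv : ((A + E)⁻¹)ᴴ = (A + E)⁻¹ := hB.inv.isHermitian
  have first_nonneg : 0 ≤ ((A + E)⁻¹ * E * (A + E)⁻¹).trace := by
    simpa only [hBinv] using (hE.conjTranspose_mul_mul_same (A + E)⁻¹).trace_nonneg
  have second_pos : 0 < ((A + E)⁻¹ * E * A⁻¹ * (E * (A + E)⁻¹)).trace := by
    have hC : E * (A + E)⁻¹ ≠ 0 := hB.inv.isUnit.mul_left_eq_zero.not.mpr hE0
    simpa only [conjTranspose_mul, hBinv, hE.isHermitian.eq] using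
      trace_conjTranspose_mul_mul_pos hA.inv hC
  refine ⟨hB.isUnit, sub_pos.mp ?_⟩
  rw [← trace_sub, inv_sub_inv_add_eq hA.isUnit hB.isUnit, trace_add]
  exact add_pos_of_nonneg_of_pos first_nonneg second_pos

end

/-- Adding a nonzero positive semidefinite Hermitian matrix to a positive definite
Hermitian matrix strictly decreases the trace of the inverse (the traces are real and
compared in the complex order). -/
theorem trace_inv_strict_decrease {n : ℕ}
    (A E : Matrix (Fin n) (Fin n) ℂ)
    (hA : A.PosDef) (hE : E.PosSemidef) (hE0 : E ≠ 0) :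
    IsUnit (A + E) ∧ ((A + E)⁻¹).trace < (A⁻¹).trace :=
  trace_inv_strict_decrease_general hA hE hE0
end

section
/- Let Q > 0 and σ_r > 0. For σ_f > 0 set K(σ_f) := σ_r²/(4σ_f²) and define the 2×2 real matrix R(σ_f) := σ_f² · [[2, c(σ_f)], [c(σ_f), 2]] where c(σ_f) := (2Q + K(σ_f))/(Q + K(σ_f)). Then R(σ_f) is invertible for every σ_f > 0, and as σ_f → ∞, R(σ_f)⁻¹ converges to (2Q/σ_r²) · ζζᵀ, where ζ = (1, −1)ᵀ, i.e., to (2Q/σ_r²) · [[1, −1], [−1, 1]]. -/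
open Matrix Filter

/-!
The eigenvalues of `σ_f² [[2, c], [c, 2]]` are `σ_f² (2 + c)` on `(1, 1)ᵀ` and `σ_f² (2 - c)` on
`ζ = (1, -1)ᵀ`. As `σ_f → ∞` the first diverges, while the second stays bounded: `2 - c` equals
`K / (Q + K)` and `σ_f² K = σ_r² / 4` is constant, so it tends to `σ_r² / (4 Q)`. Only the
`ζ`-direction survives in the inverse.
-/

section TwoByTwo

theorem det_smul_fin_two_symm {A : Type*} [CommRing A] (t a c : A) :
    (t • !![a, c; c, a]).det = t ^ 2 * ((a - c) * (a + c)) := by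
  rw [det_smul, det_fin_two_of, Fintype.card_fin]
  ring

variable {F : Type*} [Field F]

theorem isUnit_smul_fin_two_symm_iff {t a c : F} :
    IsUnit (t • !![a, c; c, a]) ↔ t ≠ 0 ∧ a - c ≠ 0 ∧ a + c ≠ 0 := by
  simp only [isUnit_iff_isUnit_det, det_smul_fin_two_symm, isUnit_iff_ne_zero, mul_ne_zero_iff,
    pow_ne_zero_iff two_ne_zero]

theorem inv_smul_fin_two_symm (t a c : F) :
    (t • !![a, c; c, a])⁻¹ = (t * (a - c) * (a + c))⁻¹ • !![a, -c; -c, a] := by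
  have hscale : (t ^ 2 * ((a - c) * (a + c)))⁻¹ * t = (t * (a - c) * (a + c))⁻¹ := by
    rcases eq_or_ne t 0 with rfl | ht
    · simp
    · field_simp
  rw [inv_def, det_smul_fin_two_symm, adjugate_smul, adjugate_fin_two_of, Ring.inverse_eq_inv',
    Fintype.card_fin, pow_one, smul_smul, hscale]

theorem tendsto_inv_smul_fin_two_symm [TopologicalSpace F] [IsTopologicalDivisionRing F]
    [NeZero (2 : F)] {ι : Type*} {l : Filter ι} {t c : ι → F} {a d : F} (ha : a ≠ 0) (hd : d ≠ 0)
    (hc : Tendsto c l (nhds a)) (htc : Tendsto (fun i => t i * (a - c i)) l (nhds d)) :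
    Tendsto (fun i => (t i • !![a, c i; c i, a])⁻¹) l
      (nhds ((2 * d)⁻¹ • !![1, -1; -1, 1])) := by
  have hsum : a + a ≠ 0 := by
    rw [← two_mul]
    exact mul_ne_zero two_ne_zero ha
  have hlimit : (2 * d)⁻¹ • !![1, -1; -1, 1] = (d * (a + a))⁻¹ • !![a, -a; -a, a] := by
    have hscale : (2 * d)⁻¹ = (d * (a + a))⁻¹ * a := by
      rw [← two_mul]
      field_simp
    simp [hscale]
  have hdet : Tendsto (fun i => (t i * (a - c i) * (a + c i))⁻¹) l (nhds (d * (a + a))⁻¹) :=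
    (htc.mul (hc.const_add a)).inv₀ (mul_ne_zero hd hsum)
  have hadj : Tendsto (fun i => !![a, -c i; -c i, a]) l (nhds !![a, -a; -a, a]) := by
    have hcont : Continuous fun x : F => !![a, -x; -x, a] := by fun_prop
    exact (hcont.tendsto a).comp hc
  simp only [inv_smul_fin_two_symm]
  rw [hlimit]
  exact hdet.smul hadj

end TwoByTwo

section PriorCovariance

variable {F : Type*} [Field F]

/-- The prior weight `K`, as a function of `σ_r` and of the scale `σ_f` of the frequency prior. -/
def priorWeight (σr σf : F) : F := σr ^ 2 / (4 * σf ^ 2)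

/-- The off-diagonal coefficient `c` of the prior covariance `σ_f² [[2, c], [c, 2]]`, as a function
of the effective signal power `Q` and of the prior weight `k`. -/
def crossCoeff (Q k : F) : F := (2 * Q + k) / (Q + k)

theorem two_sub_crossCoeff {Q k : F} (h : Q + k ≠ 0) :
    2 - crossCoeff Q k = k / (Q + k) := by
  rw [crossCoeff, eq_div_iff h, sub_mul, div_mul_cancel₀ _ h]
  ring

theorem sq_mul_priorWeight (σr : F) {σf : F} (hσf : σf ≠ 0) :
    σf ^ 2 * priorWeight σr σf = σr ^ 2 / 4 := by
  unfold priorWeight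
  field_simp

theorem tendsto_crossCoeff_nhds_zero [TopologicalSpace F] [IsTopologicalDivisionRing F]
    {Q : F} (hQ : Q ≠ 0) : Tendsto (crossCoeff Q) (nhds 0) (nhds 2) := by
  have hcont : ContinuousAt (crossCoeff Q) 0 := by
    unfold crossCoeff
    exact ContinuousAt.div (by fun_prop) (by fun_prop) (by simpa using hQ)
  have hzero : crossCoeff Q 0 = 2 := by simp [crossCoeff, hQ]
  simpa only [hzero] using hcont.tendsto

section Ordered

variable [LinearOrder F] [IsStrictOrderedRing F]

theorem priorWeight_pos {σr σf : F} (hσr : σr ≠ 0) (hσf : σf ≠ 0) : 0 < priorWeight σr σf := by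
  unfold priorWeight
  positivity

theorem crossCoeff_pos {Q k : F} (hQ : 0 < Q) (hk : 0 < k) : 0 < crossCoeff Q k := by
  unfold crossCoeff
  positivity

theorem crossCoeff_lt_two {Q k : F} (hQ : 0 < Q) (hk : 0 < k) : crossCoeff Q k < 2 := by
  rw [← sub_pos, two_sub_crossCoeff (by positivity)]
  positivity

variable [TopologicalSpace F] [OrderTopology F]

theorem tendsto_priorWeight_atTop (σr : F) : Tendsto (priorWeight σr) atTop (nhds 0) :=
  ((tendsto_pow_atTop two_ne_zero).const_mul_atTop four_pos).const_div_atTop _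

theorem tendsto_sq_mul_two_sub_crossCoeff {Q : F} (hQ : Q ≠ 0) (σr : F) :
    Tendsto (fun σf => σf ^ 2 * (2 - crossCoeff Q (priorWeight σr σf))) atTop
      (nhds (σr ^ 2 / 4 / Q)) := by
  have hden : Tendsto (fun σf => Q + priorWeight σr σf) atTop (nhds Q) := by
    simpa only [add_zero] using (tendsto_priorWeight_atTop σr).const_add Q
  have hlim : Tendsto (fun σf => σr ^ 2 / 4 / (Q + priorWeight σr σf)) atTop
      (nhds (σr ^ 2 / 4 / Q)) := tendsto_const_nhds.div hden hQ
  refine hlim.congr' ?_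
  filter_upwards [eventually_ne_atTop 0, hden.eventually_ne hQ] with σf hσf hQK
  rw [two_sub_crossCoeff hQK, ← mul_div_assoc, sq_mul_priorWeight σr hσf]

end Ordered

end PriorCovariance

/-- For the prior covariance `R(σ_f) = σ_f² [[2, c],[c, 2]]` with
`c = (2Q + K)/(Q + K)`, `K = σ_r²/(4σ_f²)`: `R(σ_f)` is invertible for all `σ_f > 0`,
and `R(σ_f)⁻¹ → (2Q/σ_r²) ζζᵀ` as `σ_f → ∞`, where `ζ = (1, −1)ᵀ`. -/
theorem prior_covariance_inverse_limit (Q σr : ℝ) (hQ : 0 < Q) (hσr : 0 < σr)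
    (K c : ℝ → ℝ) (R : ℝ → Matrix (Fin 2) (Fin 2) ℝ)
    (hK : ∀ σf, K σf = σr ^ 2 / (4 * σf ^ 2))
    (hc : ∀ σf, c σf = (2 * Q + K σf) / (Q + K σf))
    (hR : ∀ σf, R σf = σf ^ 2 • !![2, c σf; c σf, 2]) :
    (∀ σf : ℝ, 0 < σf → IsUnit (R σf)) ∧
    Tendsto (fun σf => (R σf)⁻¹) atTop
      (nhds ((2 * Q / σr ^ 2) • !![1, -1; -1, 1])) := by
  obtain rfl : K = priorWeight σr := funext hK
  obtain rfl : c = fun σf => crossCoeff Q (priorWeight σr σf) := funext hc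
  simp only [hR]
  constructor
  · intro σf hσf
    have hKpos := priorWeight_pos hσr.ne' hσf.ne'
    exact isUnit_smul_fin_two_symm_iff.2 ⟨pow_ne_zero 2 hσf.ne',
      sub_ne_zero.2 (crossCoeff_lt_two hQ hKpos).ne',
      (add_pos two_pos (crossCoeff_pos hQ hKpos)).ne'⟩
  · have hlimit : 2 * Q / σr ^ 2 = (2 * (σr ^ 2 / 4 / Q))⁻¹ := by
      field_simp
      norm_num
    rw [hlimit]
    exact tendsto_inv_smul_fin_two_symm two_ne_zero (by positivity)
      ((tendsto_crossCoeff_nhds_zero hQ.ne').comp (tendsto_priorWeight_atTop σr))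
      (tendsto_sq_mul_two_sub_crossCoeff hQ.ne' σr)
end

section
/- Let a > 0 and A, B > 0. For γ ∈ ℝ and σ_f > 0, with s := 1/σ_f², define the 2×2 real matrix R(γ, σ_f) := σ_f² · [[2, (a(1+γ)+s)/(a+s)], [(a(1+γ)+s)/(a+s), 2(a(1−γ+γ²)+s)/(a+s)]], let Δ := diag(A, B), and let T(γ, σ_f) := trace((Δ + R(γ, σ_f)⁻¹)⁻¹). Then: (i) for every fixed γ ≠ 1, lim_{σ_f → ∞} T(γ, σ_f) = 1/A + 1/B; (ii) lim_{σ_f → ∞} T(1, σ_f) = trace((Δ + (a/2)·ζζᵀ)⁻¹) where ζ = (1, −1)ᵀ, and this limit is strictly less than 1/A + 1/B. (This makes precise the paper's claim that as σ_f → ∞ the optimal relay adjustment parameter is γ_opt = 1: in the uninformative-prior limit only γ = 1 strictly reduces the summed Cramér–Rao bound below the unaided value.) -/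
open Matrix Filter

/-!
With `s = 1 / σ_f ^ 2` the prior information `R⁻¹` is `s • M⁻¹`, where `M` is the prior covariance
in units of `σ_f ^ 2`. As `s → 0` the matrix `M` converges, to a limit of determinant
`3 (γ - 1) ^ 2`. For `γ ≠ 1` the prior information therefore vanishes. For `γ = 1` the matrix `M`
has eigenvectors `(1, 1)` and `ζ = (1, -1)`; its eigenvalue on `ζ` is `s / (a + s)`, which vanishes
at the same rate as `s`, so that the information `(a / 2) ζζᵀ` survives in the limit.
Information that is positive semidefinite and nonzero strictly decreases the summed bound: with
`K = (P + Q)⁻¹` one has `P⁻¹ - K = K Q K + (Q K)ᴴ P⁻¹ (Q K)`, and the first term has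
positive trace.
-/

open scoped Topology

section Inverse

variable {n K : Type*} [Fintype n] [DecidableEq n] [Field K]

lemma matrix_inv_smul₀ (c : K) (M : Matrix n n K) : (c • M)⁻¹ = c⁻¹ • M⁻¹ := by
  obtain rfl | hc := eq_or_ne c 0
  · simp
  by_cases hM : IsUnit M.det
  · exact inv_smul' M (Units.mk0 c hc) hM
  · have hcM : ¬IsUnit (c • M).det := by simpa [hc] using hM
    rw [nonsing_inv_apply_not_isUnit _ hM, nonsing_inv_apply_not_isUnit _ hcM, smul_zero]

lemma continuousAt_matrix_inv₀ [TopologicalSpace K] [IsTopologicalRing K] [ContinuousInv₀ K]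
    {M : Matrix n n K} (hM : IsUnit M) : ContinuousAt Inv.inv M := by
  refine continuousAt_matrix_inv M ?_
  rw [Ring.inverse_eq_inv']
  exact continuousAt_inv₀ ((isUnit_iff_isUnit_det M).mp hM).ne_zero

-- The right-hand side is the spectral decomposition along `(1, -1)` and `(1, 1)`.
lemma inv_circulant_fin_two [NeZero (2 : K)] {x y : K} (hsub : x - y ≠ 0) (hadd : x + y ≠ 0) :
    (!![x, y; y, x])⁻¹ =
      (2 * (x - y))⁻¹ • !![1, -1; -1, 1] + (2 * (x + y))⁻¹ • !![1, 1; 1, 1] := by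
  have two_ne : (2 : K) ≠ 0 := two_ne_zero
  refine inv_eq_right_inv ?_
  simp only [smul_of, smul_cons, smul_eq_mul, smul_empty, of_add_of, add_cons, head_cons, tail_cons,
    empty_add_empty, mul_fin_two, one_fin_two]
  congr <;> field_simp <;> ring

end Inverse

section TraceInverse

variable {n R 𝕜 : Type*} [Fintype n] [DecidableEq n] [CommRing R] [StarRing R] [RCLike 𝕜]

lemma inv_sub_inv_add_eq_s12 {P Q : Matrix n n R} (hP : P.IsHermitian) (hQ : Q.IsHermitian)
    (hPu : IsUnit P) (hPQu : IsUnit (P + Q)) :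
    P⁻¹ - (P + Q)⁻¹ =
      ((P + Q)⁻¹)ᴴ * Q * (P + Q)⁻¹ + (Q * (P + Q)⁻¹)ᴴ * P⁻¹ * (Q * (P + Q)⁻¹) := by
  set K := (P + Q)⁻¹
  have hK : Kᴴ = K := (hP.add hQ).inv
  have left : P⁻¹ - K = P⁻¹ * Q * K := by
    simpa [K] using inv_sub_inv (iff_of_true hPu hPQu)
  have right : P⁻¹ - K = K * Q * P⁻¹ := by
    rw [← neg_sub, inv_sub_inv (iff_of_true hPQu hPu)]
    simp [K]
  calc P⁻¹ - K = K * Q * P⁻¹ := right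
    _ = K * Q * (K + P⁻¹ * Q * K) := by rw [← left, add_sub_cancel]
    _ = Kᴴ * Q * K + (Q * K)ᴴ * P⁻¹ * (Q * K) := by
      rw [conjTranspose_mul, hK, hQ.eq]
      noncomm_ring

open scoped ComplexOrder in
lemma trace_inv_add_lt {P Q : Matrix n n 𝕜} (hP : P.PosDef) (hQ : Q.PosSemidef) (hQ0 : Q ≠ 0) :
    ((P + Q)⁻¹).trace < (P⁻¹).trace := by
  have hPQ : IsUnit (P + Q) := (hP.add_posSemidef hQ).isUnit
  have hfirst := hQ.conjTranspose_mul_mul_same (P + Q)⁻¹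
  have hsecond := hP.inv.posSemidef.conjTranspose_mul_mul_same (Q * (P + Q)⁻¹)
  have hfirst_ne : ((P + Q)⁻¹)ᴴ * Q * (P + Q)⁻¹ ≠ 0 := by
    have hK : IsUnit (P + Q)⁻¹ := isUnit_nonsing_inv_iff.mpr hPQ
    have hKstar : IsUnit ((P + Q)⁻¹)ᴴ := hK.star
    rwa [Ne, hK.mul_left_eq_zero, hKstar.mul_right_eq_zero]
  have hfirst_pos := hfirst.trace_nonneg.lt_of_ne' (mt hfirst.trace_eq_zero_iff.mp hfirst_ne)
  rw [← sub_pos, ← trace_sub, inv_sub_inv_add_eq_s12 hP.isHermitian hQ.isHermitian hP.isUnit hPQ,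
    trace_add]
  exact add_pos_of_pos_of_nonneg hfirst_pos hsecond.trace_nonneg

end TraceInverse

section FinTwo

variable {R K : Type*} [CommRing R] [PartialOrder R] [StarRing R] [StarOrderedRing R] [Field K]

lemma posSemidef_one_neg_one : (!![1, -1; -1, 1] : Matrix (Fin 2) (Fin 2) R).PosSemidef := by
  convert posSemidef_vecMulVec_self_star (![1, -1] : Fin 2 → R) using 1
  ext i j
  fin_cases i <;> fin_cases j <;> simp [vecMulVec]

lemma posDef_diagonal_fin_two [NoZeroDivisors R] {x y : R} (hx : 0 < x) (hy : 0 < y) :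
    !![x, 0; 0, y].PosDef := by
  rw [← diagonal_vec2]
  exact .diagonal (Fin.forall_fin_two.mpr ⟨hx, hy⟩)

lemma trace_inv_diagonal_fin_two {x y : K} (hx : x ≠ 0) (hy : y ≠ 0) :
    (!![x, 0; 0, y])⁻¹.trace = 1 / x + 1 / y := by
  rw [inv_def, det_fin_two_of, adjugate_fin_two_of, trace_smul, trace_fin_two_of, mul_zero,
    sub_zero, Ring.inverse_eq_inv', smul_eq_mul]
  field_simp

end FinTwo

lemma tendsto_one_div_pow_atTop_nhdsNE_zero {K : Type*} [Field K] [LinearOrder K]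
    [IsStrictOrderedRing K] [TopologicalSpace K] [OrderTopology K] {k : ℕ} (hk : k ≠ 0) :
    Tendsto (fun x : K => 1 / x ^ k) atTop (𝓝[≠] 0) := by
  simp only [one_div]
  exact (tendsto_inv_atTop_nhdsGT_zero.comp (tendsto_pow_atTop hk)).mono_right
    (nhdsWithin_mono 0 fun _ hx => ne_of_gt hx)

/-- The sum of the Bayesian Cramér–Rao bounds for a parameter vector with data Fisher information
`Δ` and prior covariance `R`. -/
noncomputable def summedCRB {n : Type*} [Fintype n] [DecidableEq n] (Δ R : Matrix n n ℝ) : ℝ :=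
  ((Δ + R⁻¹)⁻¹).trace

lemma tendsto_summedCRB {ι n : Type*} [Fintype n] [DecidableEq n] {l : Filter ι}
    {R : ι → Matrix n n ℝ} {Δ J : Matrix n n ℝ} (hR : Tendsto (fun i => (R i)⁻¹) l (𝓝 J))
    (hJ : IsUnit (Δ + J)) :
    Tendsto (fun i => summedCRB Δ (R i)) l (𝓝 ((Δ + J)⁻¹.trace)) :=
  (continuous_id.matrix_trace.tendsto _).comp
    ((continuousAt_matrix_inv₀ hJ).tendsto.comp (hR.const_add Δ))

/-- The prior covariance of `(f_sd, f_rd)` in units of `σ_f ^ 2`, as a function of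
`s = 1 / σ_f ^ 2`. -/
noncomputable def relayPriorShape (a γ s : ℝ) : Matrix (Fin 2) (Fin 2) ℝ :=
  !![2, (a * (1 + γ) + s) / (a + s);
     (a * (1 + γ) + s) / (a + s), 2 * (a * (1 - γ + γ ^ 2) + s) / (a + s)]

/-- The prior covariance `R(γ, σ_f)` of the frequency pair `(f_sd, f_rd)`, where `a` is the
source–relay link quality. -/
noncomputable def relayPriorCov (a γ σf : ℝ) : Matrix (Fin 2) (Fin 2) ℝ :=
  σf ^ 2 • relayPriorShape a γ (1 / σf ^ 2)

section RelayPrior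

variable {a γ s : ℝ}

lemma relayPriorCov_inv (a γ σf : ℝ) :
    (relayPriorCov a γ σf)⁻¹ = (1 / σf ^ 2) • (relayPriorShape a γ (1 / σf ^ 2))⁻¹ := by
  rw [relayPriorCov, matrix_inv_smul₀, one_div]

lemma det_relayPriorShape_zero (ha : a ≠ 0) : (relayPriorShape a γ 0).det = 3 * (γ - 1) ^ 2 := by
  simp only [relayPriorShape, det_fin_two_of, add_zero]
  field_simp
  ring

lemma continuousAt_relayPriorShape_zero (ha : a ≠ 0) (γ : ℝ) :
    ContinuousAt (relayPriorShape a γ) 0 := by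
  have hden : a + 0 ≠ 0 := by simpa using ha
  have hoff : ContinuousAt (fun s => (a * (1 + γ) + s) / (a + s)) 0 := by
    fun_prop (disch := assumption)
  have hdiag : ContinuousAt (fun s => 2 * (a * (1 - γ + γ ^ 2) + s) / (a + s)) 0 := by
    fun_prop (disch := assumption)
  refine continuousAt_pi.mpr fun i => continuousAt_pi.mpr fun j => ?_
  fin_cases i <;> fin_cases j
  exacts [continuousAt_const, hoff, hoff, hdiag]

lemma tendsto_smul_relayPriorShape_inv_of_ne_one (ha : a ≠ 0) (hγ : γ ≠ 1) :
    Tendsto (fun s => s • (relayPriorShape a γ s)⁻¹) (𝓝 0) (𝓝 0) := by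
  have hunit : IsUnit (relayPriorShape a γ 0) := by
    rw [isUnit_iff_isUnit_det, det_relayPriorShape_zero ha, isUnit_iff_ne_zero]
    exact mul_ne_zero three_ne_zero (pow_ne_zero 2 (sub_ne_zero.mpr hγ))
  simpa using tendsto_id.smul ((continuousAt_matrix_inv₀ hunit).tendsto.comp
    (continuousAt_relayPriorShape_zero ha γ))

lemma smul_relayPriorShape_one_inv (hs : s ≠ 0) (has : a + s ≠ 0) (hsum : 4 * a + 3 * s ≠ 0) :
    s • (relayPriorShape a 1 s)⁻¹ =
      ((a + s) / 2) • !![1, -1; -1, 1] +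
        (s * (a + s) / (2 * (4 * a + 3 * s))) • !![1, 1; 1, 1] := by
  set m := (2 * a + s) / (a + s) with hm
  have hshape : relayPriorShape a 1 s = !![2, m; m, 2] := by
    have hdiag : 2 * (a * (1 - 1 + 1 ^ 2) + s) / (a + s) = 2 := by field_simp; ring
    have hoff : (a * (1 + 1) + s) / (a + s) = m := by rw [hm]; ring
    rw [relayPriorShape, hdiag, hoff]
  have hsub : 2 - m = s / (a + s) := by rw [hm]; field_simp; ring
  have hadd : 2 + m = (4 * a + 3 * s) / (a + s) := by rw [hm]; field_simp; ring
  rw [hshape, inv_circulant_fin_two (by rw [hsub]; exact div_ne_zero hs has)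
    (by rw [hadd]; exact div_ne_zero hsum has), hsub, hadd, smul_add, smul_smul, smul_smul]
  congr 2 <;> field_simp

lemma tendsto_smul_relayPriorShape_one_inv (ha : a ≠ 0) :
    Tendsto (fun s => s • (relayPriorShape a 1 s)⁻¹) (𝓝[≠] 0)
      (𝓝 ((a / 2) • !![1, -1; -1, 1])) := by
  have hden : Tendsto (fun s => a + s) (𝓝 0) (𝓝 a) :=
    Continuous.tendsto' (by fun_prop) 0 a (add_zero a)
  have hsum : Tendsto (fun s => 4 * a + 3 * s) (𝓝 0) (𝓝 (4 * a)) :=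
    Continuous.tendsto' (by fun_prop) 0 (4 * a) (by simp)
  have hsum_ne : 4 * a ≠ 0 := mul_ne_zero four_ne_zero ha
  have hcoeff : Tendsto (fun s => s * (a + s) / (2 * (4 * a + 3 * s))) (𝓝 0) (𝓝 0) := by
    have hquot : Tendsto (fun s => s * (a + s) / (2 * (4 * a + 3 * s))) (𝓝 0)
        (𝓝 (0 * a / (2 * (4 * a)))) :=
      (tendsto_id.mul hden).div (hsum.const_mul 2) (mul_ne_zero two_ne_zero hsum_ne)
    rwa [zero_mul, zero_div] at hquot
  have hlim := ((hden.div_const 2).smul_const (!![1, -1; -1, 1] : Matrix _ _ ℝ)).add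
    (hcoeff.smul_const (!![1, 1; 1, 1] : Matrix _ _ ℝ))
  rw [zero_smul, add_zero] at hlim
  refine (hlim.mono_left nhdsWithin_le_nhds).congr' ?_
  filter_upwards [self_mem_nhdsWithin, nhdsWithin_le_nhds (hden.eventually_ne ha),
    nhdsWithin_le_nhds (hsum.eventually_ne hsum_ne)] with s hs has hsum
  exact (smul_relayPriorShape_one_inv hs has hsum).symm

lemma tendsto_relayPriorCov_inv_of_ne_one (ha : a ≠ 0) (hγ : γ ≠ 1) :
    Tendsto (fun σf => (relayPriorCov a γ σf)⁻¹) atTop (𝓝 0) := by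
  simp only [relayPriorCov_inv]
  exact (tendsto_smul_relayPriorShape_inv_of_ne_one ha hγ).comp
    ((tendsto_one_div_pow_atTop_nhdsNE_zero two_ne_zero).mono_right nhdsWithin_le_nhds)

lemma tendsto_relayPriorCov_one_inv (ha : a ≠ 0) :
    Tendsto (fun σf => (relayPriorCov a 1 σf)⁻¹) atTop
      (𝓝 ((a / 2) • !![1, -1; -1, 1])) := by
  simp only [relayPriorCov_inv]
  exact (tendsto_smul_relayPriorShape_one_inv ha).comp
    (tendsto_one_div_pow_atTop_nhdsNE_zero two_ne_zero)

end RelayPrior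

theorem gamma_one_optimal_large_sigma_general {a : ℝ} (ha : 0 < a) {Δ : Matrix (Fin 2) (Fin 2) ℝ}
    (hΔ : Δ.PosDef) :
    (∀ γ : ℝ, γ ≠ 1 →
      Tendsto (fun σf => summedCRB Δ (relayPriorCov a γ σf)) atTop (𝓝 Δ⁻¹.trace)) ∧
    Tendsto (fun σf => summedCRB Δ (relayPriorCov a 1 σf)) atTop
      (𝓝 ((Δ + (a / 2) • !![1, -1; -1, 1])⁻¹.trace)) ∧
    (Δ + (a / 2) • !![1, -1; -1, 1])⁻¹.trace < Δ⁻¹.trace := by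
  set J : Matrix (Fin 2) (Fin 2) ℝ := (a / 2) • !![1, -1; -1, 1] with hJ_def
  have hJ : J.PosSemidef := posSemidef_one_neg_one.smul (half_pos ha).le
  have hJ_ne : J ≠ 0 := fun h => by simpa [hJ_def, ha.ne'] using congrFun₂ h 0 0
  refine ⟨fun γ hγ => ?_, ?_, trace_inv_add_lt hΔ hJ hJ_ne⟩
  · have hunit : IsUnit (Δ + 0) := by simpa only [add_zero] using hΔ.isUnit
    simpa only [add_zero] using
      tendsto_summedCRB (tendsto_relayPriorCov_inv_of_ne_one ha.ne' hγ) hunit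
  · exact tendsto_summedCRB (tendsto_relayPriorCov_one_inv ha.ne') (hΔ.add_posSemidef hJ).isUnit

/-- In the uninformative-prior limit `σ_f → ∞`: for fixed `γ ≠ 1` the summed CRB
`T(γ, σ_f) = tr((Δ + R(γ,σ_f)⁻¹)⁻¹)` tends to the unaided value `1/A + 1/B`, whereas for
`γ = 1` it tends to `tr((Δ + (a/2) ζζᵀ)⁻¹)`, which is strictly smaller than `1/A + 1/B`. -/
theorem gamma_one_optimal_large_sigma (a A B : ℝ) (ha : 0 < a) (hA : 0 < A) (hB : 0 < B)
    (s : ℝ → ℝ) (hs : ∀ σf, s σf = 1 / σf ^ 2)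
    (R : ℝ → ℝ → Matrix (Fin 2) (Fin 2) ℝ)
    (hR : ∀ γ σf, R γ σf = σf ^ 2 •
      !![2, (a * (1 + γ) + s σf) / (a + s σf);
         (a * (1 + γ) + s σf) / (a + s σf), 2 * (a * (1 - γ + γ ^ 2) + s σf) / (a + s σf)])
    (Δ : Matrix (Fin 2) (Fin 2) ℝ) (hΔ : Δ = !![A, 0; 0, B])
    (T : ℝ → ℝ → ℝ) (hT : ∀ γ σf, T γ σf = ((Δ + (R γ σf)⁻¹)⁻¹).trace) :
    (∀ γ : ℝ, γ ≠ 1 → Tendsto (fun σf => T γ σf) atTop (nhds (1 / A + 1 / B))) ∧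
    Tendsto (fun σf => T 1 σf) atTop
      (nhds (((Δ + (a / 2) • !![1, -1; -1, 1])⁻¹).trace)) ∧
    ((Δ + (a / 2) • !![1, -1; -1, 1])⁻¹).trace < 1 / A + 1 / B := by
  simpa only [hT, hR, hs, hΔ, summedCRB, relayPriorCov, relayPriorShape,
    trace_inv_diagonal_fin_two hA.ne' hB.ne'] using
    gamma_one_optimal_large_sigma_general ha (posDef_diagonal_fin_two hA hB)
end
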